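/- arXiv:1901.02737 — 2 statements merged into one kernel-verified Lean document; each statement's English description precedes it below -/
import Mathlib

section
/- Let a ∈ 𝔻, f₀ ∈ 𝒮^∞, let c₀, c₁, λ ∈ ℂ with |c₀| = |c₁| = |λ| = 1, let b ∈ 𝔻, and set ρ(z) = λ·(z − b)/(conj(b)·z − 1) for z ∈ 𝔻. Then the map T defined by T(f)(z) = f₀(z) + c₀·f(a) + ∫_{[a,z]} c₁·conj(f'(conj(ρ(ζ)))) dζ maps 𝒮^∞ into 𝒮^∞ and is a surjective isometry of 𝒮^∞ with respect to the norm ‖·‖_σ. -/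
open Complex Metric Set

/-- `f` belongs to `𝒮^∞`: `f` is analytic on the open unit disc `𝔻` and its
derivative is bounded on `𝔻`. -/
def MemSInf (f : ℂ → ℂ) : Prop :=
  DifferentiableOn ℂ f (ball (0 : ℂ) 1) ∧
    ∃ M : ℝ, ∀ z ∈ ball (0 : ℂ) 1, ‖deriv f z‖ ≤ M

/-- The norm `‖f‖_σ = |f(a)| + sup_{w ∈ 𝔻} |f'(w)|`. -/
noncomputable def normSigmaA (a : ℂ) (f : ℂ → ℂ) : ℝ :=
  ‖f a‖ + ⨆ w : ball (0 : ℂ) 1, ‖deriv f (w : ℂ)‖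

/-- The line integral `∫_{[a,z]} g(ζ) dζ = ∫₀¹ g(a + t(z − a))·(z − a) dt`
along the straight segment from `a` to `z`. -/
noncomputable def lineInt (g : ℂ → ℂ) (a z : ℂ) : ℂ :=
  ∫ t in (0:ℝ)..1, g (a + (t : ℂ) * (z - a)) * (z - a)

/-!
The derivative of `T f - f₀` is `c₁ · conj (f' ∘ φ)` with `φ = conj ∘ ρ`, an antiholomorphic
self-bijection of the disc, and its value at `a` is `c₀ f(a)`; hence `T` preserves both terms of
the norm of a difference. The inverse of `φ` is again of the form `conj ∘ ρ'`, where `ρ'` is `ρ`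
with `conj (λ b)` in place of `b`, so `f ↦ T f - f₀` is inverted by an operator of the same shape.
-/

open scoped ComplexConjugate

local notation "𝔻" => ball (0 : ℂ) 1

variable {U V : Set ℂ} {a b c₀ c₁ lam z : ℂ} {ρ : ℂ → ℂ}

lemma mul_conj_eq_one_of_norm_eq_one (hz : ‖z‖ = 1) : z * conj z = 1 := by
  rw [mul_conj', hz, ofReal_one, one_pow]

lemma conj_mem_ball_zero {r : ℝ} (hz : z ∈ ball 0 r) : conj z ∈ ball 0 r := by
  rwa [mem_ball_zero_iff, norm_conj, ← mem_ball_zero_iff]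

lemma conj_mul_mem_ball_zero {r : ℝ} (hlam : ‖lam‖ = 1) (hz : z ∈ ball 0 r) :
    conj (lam * z) ∈ ball 0 r := by
  rwa [mem_ball_zero_iff, norm_conj, norm_mul, hlam, one_mul, ← mem_ball_zero_iff]

section LineIntegral

variable {G : ℂ → ℂ}

lemma lineInt_self (G : ℂ → ℂ) (a : ℂ) : lineInt G a a = 0 := by
  simp only [lineInt, sub_self, mul_zero, intervalIntegral.integral_zero]

lemma lineInt_eq_curveIntegral (G : ℂ → ℂ) (a z : ℂ) :
    lineInt G a z = ∫ᶜ x in .segment a z, ContinuousLinearMap.toSpanSingleton ℂ (G x) := by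
  rw [curveIntegral_segment]
  refine intervalIntegral.integral_congr fun t _ => ?_
  simp [AffineMap.lineMap_apply, mul_comm, add_comm]

lemma hasDerivAt_lineInt (hU : IsOpen U) (hUc : Convex ℝ U) (hG : DifferentiableOn ℂ G U)
    (ha : a ∈ U) (hz : z ∈ U) : HasDerivAt (lineInt G a) (G z) z := by
  let toForm := (ContinuousLinearMap.toSpanSingletonCLE (𝕜 := ℂ) (E := ℂ)).toContinuousLinearMap
  let dω (x : ℂ) := (toForm ∘L fderiv ℂ G x).restrictScalars ℝ
  have hω : ∀ x ∈ U, HasFDerivWithinAt (fun x => toForm (G x)) (dω x) U x := fun x hx =>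
    ((toForm.hasFDerivAt.comp x (hG.differentiableAt (hU.mem_nhds hx)).hasFDerivAt).restrictScalars
      ℝ).hasFDerivWithinAt
  have hclosed (x u v : ℂ) : dω x u v = dω x v u := by
    simp only [dω, toForm, fderiv_eq_smul_deriv, smul_eq_mul,
      ContinuousLinearMap.coe_restrictScalars', ContinuousLinearMap.comp_apply,
      ContinuousLinearEquiv.coe_coe, ContinuousLinearMap.toSpanSingletonCLE_apply_apply]
    ring
  have hprim := hUc.hasFDerivWithinAt_curveIntegral_segment_of_hasFDerivWithinAt_symmetric hω
    (fun x _ u _ v _ => hclosed x u v) ha hz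
  have hderiv := (hprim.hasFDerivAt (hU.mem_nhds hz)).hasDerivAt
  have hval : toForm (G z) 1 = G z := one_smul ℂ (G z)
  rw [hval] at hderiv
  rwa [funext (lineInt_eq_curveIntegral G a)]

end LineIntegral

section SInf

variable {F F' f g : ℂ → ℂ} {M : ℝ}

lemma memSInf_of_hasDerivAt (hF : ∀ z ∈ 𝔻, HasDerivAt F (F' z) z) (hM : ∀ z ∈ 𝔻, ‖F' z‖ ≤ M) :
    MemSInf F :=
  ⟨fun z hz => (hF z hz).differentiableAt.differentiableWithinAt, M,
    fun z hz => (hF z hz).deriv ▸ hM z hz⟩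

lemma MemSInf.hasDerivAt (hf : MemSInf f) (hz : z ∈ 𝔻) : HasDerivAt f (deriv f z) z :=
  (hf.1.differentiableAt (isOpen_ball.mem_nhds hz)).hasDerivAt

lemma MemSInf.add (hf : MemSInf f) (hg : MemSInf g) : MemSInf (f + g) := by
  obtain ⟨M, hM⟩ := hf.2
  obtain ⟨N, hN⟩ := hg.2
  exact memSInf_of_hasDerivAt (fun z hz => (hf.hasDerivAt hz).add (hg.hasDerivAt hz))
    fun z hz => norm_add_le_of_le (hM z hz) (hN z hz)

lemma MemSInf.sub (hf : MemSInf f) (hg : MemSInf g) : MemSInf (f - g) := by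
  obtain ⟨M, hM⟩ := hf.2
  obtain ⟨N, hN⟩ := hg.2
  exact memSInf_of_hasDerivAt (fun z hz => (hf.hasDerivAt hz).sub (hg.hasDerivAt hz))
    fun z hz => norm_sub_le_of_le (hM z hz) (hN z hz)

lemma normSigmaA_eq_of_surjOn {φ : ℂ → ℂ} (hφ : MapsTo φ 𝔻 𝔻) (hφs : SurjOn φ 𝔻 𝔻)
    (hval : ‖F a‖ = ‖f a‖) (hderiv : ∀ z ∈ 𝔻, ‖deriv F z‖ = ‖deriv f (φ z)‖) :
    normSigmaA a F = normSigmaA a f := by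
  have hsup : ⨆ w : 𝔻, ‖deriv F w‖ = ⨆ w : 𝔻, ‖deriv f w‖ :=
    (hφ.restrict_surjective_iff.mpr hφs).iSup_congr _ fun w => (hderiv w w.2).symm
  rw [normSigmaA, normSigmaA, hval, hsup]

end SInf

section ConjIntegralOperator

/-- The operator `f ↦ c₀ f(a) + ∫_{[a,z]} c₁ conj (f' (conj (ρ ζ))) dζ`, which is
`T` without its constant term `f₀`. The symbol `ρ` is arbitrary, so that the inverse operator is an
instance too. -/
noncomputable def conjIntOp (a c₀ c₁ : ℂ) (ρ f : ℂ → ℂ) (z : ℂ) : ℂ :=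
  c₀ * f a + lineInt (fun ζ => c₁ * conj (deriv f (conj (ρ ζ)))) a z

variable {f g : ℂ → ℂ}

lemma conjIntOp_self (a c₀ c₁ : ℂ) (ρ f : ℂ → ℂ) : conjIntOp a c₀ c₁ ρ f a = c₀ * f a := by
  rw [conjIntOp, lineInt_self, add_zero]

lemma differentiableOn_conj_comp_conj_comp (hU : IsOpen U) (hV : IsOpen V)
    (hρ : DifferentiableOn ℂ ρ U) (hmaps : MapsTo (fun z => conj (ρ z)) U V)
    (hf : DifferentiableOn ℂ f V) : DifferentiableOn ℂ (fun z => conj (f (conj (ρ z)))) U := by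
  intro z hz
  have hconj : DifferentiableAt ℂ (conj ∘ f ∘ conj) (ρ z) :=
    differentiableAt_conj_conj_iff.mpr (hf.differentiableAt (hV.mem_nhds (hmaps hz)))
  exact (hconj.comp z (hρ.differentiableAt (hU.mem_nhds hz))).differentiableWithinAt

lemma hasDerivAt_conjIntOp (hU : IsOpen U) (hUc : Convex ℝ U) (hV : IsOpen V)
    (hρ : DifferentiableOn ℂ ρ U) (hmaps : MapsTo (fun z => conj (ρ z)) U V)
    (hf : DifferentiableOn ℂ f V) (c₀ c₁ : ℂ) (ha : a ∈ U) (hz : z ∈ U) :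
    HasDerivAt (conjIntOp a c₀ c₁ ρ f) (c₁ * conj (deriv f (conj (ρ z)))) z :=
  (hasDerivAt_lineInt hU hUc ((differentiableOn_conj_comp_conj_comp hU hV hρ hmaps
    (hf.deriv hV)).const_mul c₁) ha hz).const_add _

lemma eqOn_conjIntOp_conjIntOp {c₀' c₁' : ℂ} {ρ' : ℂ → ℂ} (hU : IsOpen U) (hUc : Convex ℝ U)
    (hV : IsOpen V) (hVc : Convex ℝ V) (haU : a ∈ U) (haV : a ∈ V)
    (hρ : DifferentiableOn ℂ ρ U) (hmaps : MapsTo (fun z => conj (ρ z)) U V)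
    (hρ' : DifferentiableOn ℂ ρ' V) (hmaps' : MapsTo (fun z => conj (ρ' z)) V U)
    (hinv : LeftInvOn (fun z => conj (ρ' z)) (fun z => conj (ρ z)) U)
    (hc₀ : c₀ * c₀' = 1) (hc₁ : c₁ * conj c₁' = 1) (hf : DifferentiableOn ℂ f U) :
    EqOn (conjIntOp a c₀ c₁ ρ (conjIntOp a c₀' c₁' ρ' f)) f U := by
  have hinner : ∀ w ∈ V, HasDerivAt (conjIntOp a c₀' c₁' ρ' f)
      (c₁' * conj (deriv f (conj (ρ' w)))) w :=
    fun w hw => hasDerivAt_conjIntOp hV hVc hU hρ' hmaps' hf c₀' c₁' haV hw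
  have houter : ∀ z ∈ U, HasDerivAt (conjIntOp a c₀ c₁ ρ (conjIntOp a c₀' c₁' ρ' f))
      (deriv f z) z := by
    intro z hz
    have hinv_z : conj (ρ' (conj (ρ z))) = z := hinv hz
    have h := hasDerivAt_conjIntOp hU hUc hV hρ hmaps
      (fun w hw => (hinner w hw).differentiableAt.differentiableWithinAt) c₀ c₁ haU hz
    rwa [(hinner _ (hmaps hz)).deriv, hinv_z, map_mul, conj_conj, ← mul_assoc, hc₁, one_mul] at h
  have hval : conjIntOp a c₀ c₁ ρ (conjIntOp a c₀' c₁' ρ' f) a = f a := by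
    rw [conjIntOp_self, conjIntOp_self, ← mul_assoc, hc₀, one_mul]
  exact hU.eqOn_of_deriv_eq hUc.isPreconnected
    (fun z hz => (houter z hz).differentiableAt.differentiableWithinAt) hf
    (fun z hz => (houter z hz).deriv) haU hval

lemma MemSInf.conjIntOp (hf : MemSInf f) (ha : a ∈ 𝔻) (hρ : DifferentiableOn ℂ ρ 𝔻)
    (hmaps : MapsTo (fun z => conj (ρ z)) 𝔻 𝔻) (c₀ c₁ : ℂ) :
    MemSInf (conjIntOp a c₀ c₁ ρ f) := by
  obtain ⟨M, hM⟩ := hf.2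
  refine memSInf_of_hasDerivAt (M := ‖c₁‖ * M) (fun z hz => hasDerivAt_conjIntOp isOpen_ball
    (convex_ball 0 1) isOpen_ball hρ hmaps hf.1 c₀ c₁ ha hz) fun z hz => ?_
  rw [norm_mul, norm_conj]
  exact mul_le_mul_of_nonneg_left (hM _ (hmaps hz)) (norm_nonneg c₁)

lemma normSigmaA_conjIntOp_sub (hf : MemSInf f) (hg : MemSInf g) (ha : a ∈ 𝔻)
    (hρ : DifferentiableOn ℂ ρ 𝔻) (hmaps : MapsTo (fun z => conj (ρ z)) 𝔻 𝔻)
    (hsurj : SurjOn (fun z => conj (ρ z)) 𝔻 𝔻) (hc₀ : ‖c₀‖ = 1) (hc₁ : ‖c₁‖ = 1) :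
    normSigmaA a (conjIntOp a c₀ c₁ ρ f - conjIntOp a c₀ c₁ ρ g) = normSigmaA a (f - g) := by
  have hderiv : ∀ h, MemSInf h → ∀ z ∈ 𝔻, HasDerivAt (conjIntOp a c₀ c₁ ρ h)
      (c₁ * conj (deriv h (conj (ρ z)))) z := fun h hh z hz =>
    hasDerivAt_conjIntOp isOpen_ball (convex_ball 0 1) isOpen_ball hρ hmaps hh.1 c₀ c₁ ha hz
  refine normSigmaA_eq_of_surjOn hmaps hsurj ?_ fun z hz => ?_
  · rw [Pi.sub_apply, conjIntOp_self, conjIntOp_self, ← mul_sub, norm_mul, hc₀, one_mul,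
      Pi.sub_apply]
  · rw [((hderiv f hf z hz).sub (hderiv g hg z hz)).deriv,
      ((hf.hasDerivAt (hmaps hz)).sub (hg.hasDerivAt (hmaps hz))).deriv,
      ← mul_sub, ← map_sub, norm_mul, hc₁, one_mul, norm_conj]

end ConjIntegralOperator

section DiscAutomorphism

/-- The automorphism `z ↦ lam (z - b) / (conj b z - 1)` of the unit disc, where `|lam| = 1` and
`|b| < 1`. -/
noncomputable def discAut (lam b z : ℂ) : ℂ := lam * (z - b) / (conj b * z - 1)

lemma conj_mul_sub_one_ne_zero (hb : b ∈ 𝔻) (hz : z ∈ 𝔻) : conj b * z - 1 ≠ 0 := by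
  rw [mem_ball_zero_iff] at hb hz
  intro h
  have hnorm : ‖b‖ * ‖z‖ = 1 := by
    rw [← norm_conj b, ← norm_mul, sub_eq_zero.mp h, norm_one]
  exact (mul_lt_one_of_nonneg_of_lt_one_left (norm_nonneg b) hb hz.le).ne hnorm

lemma sq_norm_conj_mul_sub_one_sub_sq_norm_sub (b z : ℂ) :
    ‖conj b * z - 1‖ ^ 2 - ‖z - b‖ ^ 2 = (1 - ‖b‖ ^ 2) * (1 - ‖z‖ ^ 2) := by
  simp only [Complex.sq_norm, normSq_apply, sub_re, sub_im, mul_re, mul_im, conj_re, conj_im,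
    one_re, one_im]
  ring

lemma differentiableOn_discAut (lam : ℂ) (hb : b ∈ 𝔻) :
    DifferentiableOn ℂ (discAut lam b) 𝔻 :=
  DifferentiableOn.fun_div (by fun_prop) (by fun_prop) fun _ hz => conj_mul_sub_one_ne_zero hb hz

lemma mapsTo_discAut (hlam : ‖lam‖ = 1) (hb : b ∈ 𝔻) : MapsTo (discAut lam b) 𝔻 𝔻 := by
  intro z hz
  have hden : 0 < ‖conj b * z - 1‖ := norm_pos_iff.mpr (conj_mul_sub_one_ne_zero hb hz)
  rw [mem_ball_zero_iff] at hb hz ⊢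
  have hpos : 0 < (1 - ‖b‖ ^ 2) * (1 - ‖z‖ ^ 2) :=
    mul_pos (sub_pos.mpr (pow_lt_one₀ (norm_nonneg b) hb two_ne_zero))
      (sub_pos.mpr (pow_lt_one₀ (norm_nonneg z) hz two_ne_zero))
  rw [← sq_norm_conj_mul_sub_one_sub_sq_norm_sub, sub_pos] at hpos
  rw [discAut, norm_div, norm_mul, hlam, one_mul, div_lt_one hden]
  exact lt_of_pow_lt_pow_left₀ 2 hden.le hpos

lemma mapsTo_conj_discAut (hlam : ‖lam‖ = 1) (hb : b ∈ 𝔻) :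
    MapsTo (fun z => conj (discAut lam b z)) 𝔻 𝔻 :=
  fun _ hz => conj_mem_ball_zero (mapsTo_discAut hlam hb hz)

lemma leftInvOn_conj_discAut (hlam : ‖lam‖ = 1) (hb : b ∈ 𝔻) :
    LeftInvOn (fun z => conj (discAut lam (conj (lam * b)) z))
      (fun z => conj (discAut lam b z)) 𝔻 := by
  intro z hz
  have hlam_mul := mul_conj_eq_one_of_norm_eq_one hlam
  have hw : conj (discAut lam b z) * (b * conj z - 1) = conj lam * (conj z - conj b) := by
    have h := congrArg conj (div_mul_cancel₀ (lam * (z - b)) (conj_mul_sub_one_ne_zero hb hz))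
    simpa only [discAut, map_mul, map_sub, conj_conj, map_one] using h
  have hden := conj_mul_sub_one_ne_zero (conj_mul_mem_ball_zero hlam hb)
    (mapsTo_conj_discAut hlam hb hz)
  rw [conj_conj] at hden
  have hconj : discAut lam (conj (lam * b)) (conj (discAut lam b z)) = conj z := by
    rw [discAut, conj_conj, div_eq_iff hden, map_mul]
    linear_combination -lam * hw - conj z * hlam_mul
  change conj (discAut lam (conj (lam * b)) (conj (discAut lam b z))) = z
  rw [hconj, conj_conj]

lemma rightInvOn_conj_discAut (hlam : ‖lam‖ = 1) (hb : b ∈ 𝔻) :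
    RightInvOn (fun z => conj (discAut lam (conj (lam * b)) z))
      (fun z => conj (discAut lam b z)) 𝔻 := by
  have hb_eq : conj (lam * conj (lam * b)) = b := by
    rw [map_mul, conj_conj, ← mul_assoc, mul_comm (conj lam),
      mul_conj_eq_one_of_norm_eq_one hlam, one_mul]
  have h := leftInvOn_conj_discAut hlam (conj_mul_mem_ball_zero hlam hb)
  rwa [hb_eq] at h

lemma surjOn_conj_discAut (hlam : ‖lam‖ = 1) (hb : b ∈ 𝔻) :
    SurjOn (fun z => conj (discAut lam b z)) 𝔻 𝔻 :=
  (rightInvOn_conj_discAut hlam hb).surjOn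
    (mapsTo_conj_discAut hlam (conj_mul_mem_ball_zero hlam hb))

lemma exists_memSInf_eqOn_conjIntOp_discAut {g : ℂ → ℂ} (hg : MemSInf g) (ha : a ∈ 𝔻)
    (hc₀ : c₀ ≠ 0) (hc₁ : c₁ ≠ 0) (hlam : ‖lam‖ = 1) (hb : b ∈ 𝔻) :
    ∃ f, MemSInf f ∧ EqOn (conjIntOp a c₀ c₁ (discAut lam b) f) g 𝔻 := by
  have hb' := conj_mul_mem_ball_zero hlam hb
  have hρ' := differentiableOn_discAut lam hb'
  have hmaps' := mapsTo_conj_discAut hlam hb'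
  have hc₁_mul : c₁ * conj (conj c₁⁻¹) = 1 := by rw [conj_conj, mul_inv_cancel₀ hc₁]
  exact ⟨conjIntOp a c₀⁻¹ (conj c₁⁻¹) (discAut lam (conj (lam * b))) g,
    hg.conjIntOp ha hρ' hmaps' _ _,
    eqOn_conjIntOp_conjIntOp isOpen_ball (convex_ball 0 1) isOpen_ball (convex_ball 0 1) ha ha
      (differentiableOn_discAut lam hb) (mapsTo_conj_discAut hlam hb) hρ' hmaps'
      (leftInvOn_conj_discAut hlam hb) (mul_inv_cancel₀ hc₀) hc₁_mul hg.1⟩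

end DiscAutomorphism

theorem conj_integral_form_is_surjective_isometry_normSigmaA
    (a : ℂ) (ha : a ∈ ball (0 : ℂ) 1)
    (f₀ : ℂ → ℂ) (hf₀ : MemSInf f₀)
    (c₀ c₁ lam : ℂ) (hc₀ : ‖c₀‖ = 1) (hc₁ : ‖c₁‖ = 1) (hlam : ‖lam‖ = 1)
    (b : ℂ) (hb : b ∈ ball (0 : ℂ) 1)
    (ρ : ℂ → ℂ) (hρ : ∀ z, ρ z = lam * (z - b) / ((starRingEnd ℂ) b * z - 1))
    (T : (ℂ → ℂ) → (ℂ → ℂ))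
    (hT : ∀ f z, T f z = f₀ z + c₀ * f a + lineInt (fun ζ => c₁ * (starRingEnd ℂ) (deriv f ((starRingEnd ℂ) (ρ ζ)))) a z) :
    (∀ f, MemSInf f → MemSInf (T f)) ∧
    (∀ g, MemSInf g → ∃ f, MemSInf f ∧ Set.EqOn (T f) g (ball (0 : ℂ) 1)) ∧
    (∀ f g, MemSInf f → MemSInf g →
      normSigmaA a (T f - T g) = normSigmaA a (f - g)) := by
  obtain rfl : ρ = discAut lam b := funext hρ
  have hT_eq (f : ℂ → ℂ) : T f = f₀ + conjIntOp a c₀ c₁ (discAut lam b) f := by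
    ext z
    rw [hT, Pi.add_apply, conjIntOp, add_assoc]
  have hρd := differentiableOn_discAut lam hb
  have hρm := mapsTo_conj_discAut hlam hb
  refine ⟨fun f hf => ?_, fun g hg => ?_, fun f g hf hg => ?_⟩
  · rw [hT_eq]
    exact hf₀.add (hf.conjIntOp ha hρd hρm c₀ c₁)
  · have hc₀_ne : c₀ ≠ 0 := norm_ne_zero_iff.mp (hc₀ ▸ one_ne_zero)
    have hc₁_ne : c₁ ≠ 0 := norm_ne_zero_iff.mp (hc₁ ▸ one_ne_zero)
    obtain ⟨f, hf, hfg⟩ :=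
      exists_memSInf_eqOn_conjIntOp_discAut (hg.sub hf₀) ha hc₀_ne hc₁_ne hlam hb
    refine ⟨f, hf, fun z hz => ?_⟩
    rw [hT_eq, Pi.add_apply, hfg hz, Pi.sub_apply, add_sub_cancel]
  · rw [hT_eq, hT_eq, add_sub_add_left_eq_sub]
    exact normSigmaA_conjIntOp_sub hf hg ha hρd hρm (surjOn_conj_discAut hlam hb) hc₀ hc₁
end

section
/- Let X be a compact Hausdorff topological space and let B be a complex linear subspace of the space C(X, ℂ) of continuous complex-valued functions on X (with the supremum norm) such that B contains the constant function 1 and B separates the points of X. For x ∈ X let δ_x ∈ B* be the evaluation functional δ_x(f) = f(x), and equip the dual space B* with the weak* topology. Then the map h : 𝕋 × X → B* defined by h(λ, x) = λ·δ_x is injective, and h is a homeomorphism of 𝕋 × X (with the product topology) onto its image 𝓑 = {λ·δ_x : λ ∈ 𝕋, x ∈ X} with the relative weak* topology. -/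
/-!
The functionals `δ x` all lie in the affine hyperplane `{φ | φ 1 = 1}`, which misses the origin, so
evaluating `λ • δ x` at `1` recovers the scalar `λ`, and then `δ x`, hence `x` because `B` separates
points. A continuous injection from a compact space to the Hausdorff space `B*` is an embedding.
-/

open ContinuousMap

theorem injective_smul_of_map_eq_one {𝕜 M Λ X : Type*} [GroupWithZero 𝕜] [MulAction 𝕜 M]
    (φ : M →[𝕜] 𝕜) {v : X → M} (hφ : ∀ x, φ (v x) = 1) (hv : Function.Injective v)
    {c : Λ → 𝕜} (hc : Function.Injective c) (hc₀ : ∀ l, c l ≠ 0) :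
    Function.Injective fun p : Λ × X => c p.1 • v p.2 := by
  rintro ⟨l, x⟩ ⟨m, y⟩ (hlm : c l • v x = c m • v y)
  have hscalar : c l = c m := by simpa [hφ] using congrArg φ hlm
  obtain rfl : l = m := hc hscalar
  obtain rfl : x = y := hv (MulAction.injective₀ (hc₀ l) hlm)
  rfl

section Evaluation

variable {𝕜 X : Type*} [TopologicalSpace X] [TopologicalSpace 𝕜]

section CommSemiring

variable [CommSemiring 𝕜] [IsTopologicalSemiring 𝕜]
  {B : Submodule 𝕜 C(X, 𝕜)} {δ : X → WeakDual 𝕜 B}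

theorem injective_of_forall_apply_eq_eval
    (hsep : ∀ x y : X, x ≠ y → ∃ f ∈ B, (f : C(X, 𝕜)) x ≠ f y)
    (hδ : ∀ (x : X) (f : B), δ x f = (f : C(X, 𝕜)) x) : Function.Injective δ := by
  intro x y hxy
  by_contra hne
  obtain ⟨f, hf, hfxy⟩ := hsep x y hne
  exact hfxy (by rw [← hδ x ⟨f, hf⟩, hxy, hδ])

theorem continuous_of_forall_apply_eq_eval
    (hδ : ∀ (x : X) (f : B), δ x f = (f : C(X, 𝕜)) x) : Continuous δ :=
  WeakDual.continuous_of_continuous_eval fun f => by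
    simpa only [hδ] using (f : C(X, 𝕜)).continuous

end CommSemiring

theorem circle_smul_eval_embedding_general [Field 𝕜] [IsTopologicalRing 𝕜] [T2Space 𝕜]
    [CompactSpace X] {Λ : Type*} [TopologicalSpace Λ] [CompactSpace Λ]
    (B : Submodule 𝕜 C(X, 𝕜))
    (hone : (1 : C(X, 𝕜)) ∈ B)
    (hsep : ∀ x y : X, x ≠ y → ∃ f ∈ B, (f : C(X, 𝕜)) x ≠ f y)
    (δ : X → WeakDual 𝕜 B)
    (hδ : ∀ (x : X) (f : B), δ x f = (f : C(X, 𝕜)) x)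
    {c : Λ → 𝕜} (hc : Continuous c) (hc_inj : Function.Injective c) (hc₀ : ∀ l, c l ≠ 0) :
    Topology.IsClosedEmbedding fun p : Λ × X => c p.1 • δ p.2 := by
  let evalOne : WeakDual 𝕜 B →[𝕜] 𝕜 := ⟨fun φ => φ ⟨1, hone⟩, fun _ _ => rfl⟩
  have hevalOne (x : X) : evalOne (δ x) = 1 := hδ x ⟨1, hone⟩
  have hδ_inj : Function.Injective δ := injective_of_forall_apply_eq_eval hsep hδ
  have hδ_cont : Continuous δ := continuous_of_forall_apply_eq_eval hδ
  have hcont : Continuous fun p : Λ × X => c p.1 • δ p.2 :=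
    (hc.comp continuous_fst).smul (hδ_cont.comp continuous_snd)
  exact hcont.isClosedEmbedding (injective_smul_of_map_eq_one evalOne hevalOne hδ_inj hc_inj hc₀)

end Evaluation

theorem circle_smul_eval_embedding
    {X : Type*} [TopologicalSpace X] [CompactSpace X] [T2Space X]
    (B : Submodule ℂ C(X, ℂ))
    (hone : (1 : C(X, ℂ)) ∈ B)
    (hsep : ∀ x y : X, x ≠ y → ∃ f ∈ B, (f : C(X, ℂ)) x ≠ f y)
    (δ : X → WeakDual ℂ B)
    (hδ : ∀ (x : X) (f : B), δ x f = (f : C(X, ℂ)) x)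
    (h : Circle × X → WeakDual ℂ B)
    (hh : ∀ (lam : Circle) (x : X), h (lam, x) = (lam : ℂ) • δ x) :
    Function.Injective h ∧ Topology.IsEmbedding h := by
  obtain rfl : h = fun p => (p.1 : ℂ) • δ p.2 := funext fun p => hh p.1 p.2
  have hemb := circle_smul_eval_embedding_general (Λ := Circle) B hone hsep δ hδ
    continuous_subtype_val Circle.coe_injective Circle.coe_ne_zero
  exact ⟨hemb.injective, hemb.isEmbedding⟩
end
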